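/- Let d, ℓ, g be positive integers. Suppose a : {1,...,p} → ℤ>0 and b : {1,...,q} → ℤ>0 are partitions of d (i.e. a₁ + ⋯ + a_p = d and b₁ + ⋯ + b_q = d), and m : {1,...,ℓ} → ℤ>0 satisfies m₁ + ⋯ + m_ℓ = p + q − 2 + 2g and mᵢ + 1 ≤ d for every i. Then there exist three permutations π₁, π₂, π₃ in the symmetric group S_{ℓd} on {1, …, ℓd} such that: (1) π₁ π₂ π₃ = id; (2) the cycle type of π₁ (as a partition of ℓd, counting each fixed point as a part equal to 1) is (ℓa₁, …, ℓa_p), the cycle type of π₂ is (ℓb₁, …, ℓb_q), and the cycle type of π₃ is (m₁+1, …, m_ℓ+1, 1, …, 1); (3) the subgroup of S_{ℓd} generated by π₁, π₂, π₃ acts transitively on {1, 2, …, ℓd}. -/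

import Mathlib

/-- The cycle type of a permutation of `Fin n`, as a partition of `n`:
the lengths of the cycles in the disjoint cycle decomposition, counting
each fixed point as a part equal to `1`. -/
def fullCycleType {n : ℕ} (σ : Equiv.Perm (Fin n)) : Multiset ℕ :=
  σ.cycleType + Multiset.replicate (n - σ.support.card) 1

namespace BC

open Equiv

section lists
variable {X : Type*} [DecidableEq X]

/-- Product of the cycles given by a list of lists. -/
def W (L : List (List X)) : Perm X := (L.map List.formPerm).prod

lemma W_nil : W ([] : List (List X)) = 1 := rfl

lemma W_cons (c : List X) (L : List (List X)) : W (c :: L) = c.formPerm * W L := by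
  simp [W]

lemma W_apply_of_notMem (L : List (List X)) (x : X) (h : x ∉ L.flatten) : W L x = x := by
  induction L with
  | nil => rfl
  | cons c L ih =>
    simp only [List.flatten_cons, List.mem_append, not_or] at h
    rw [W_cons, Perm.mul_apply, ih h.2, List.formPerm_apply_of_notMem h.1]

lemma formPerm_commute {l l' : List X} (h : l.Disjoint l') :
    Commute l.formPerm l'.formPerm := by
  apply Perm.Disjoint.commute
  intro x
  by_cases hx : x ∈ l
  · right; exact List.formPerm_apply_of_notMem (h hx)
  · left; exact List.formPerm_apply_of_notMem hx

lemma W_perm {L L' : List (List X)} (h : L.Perm L') (hn : L.flatten.Nodup) : W L = W L' := by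
  unfold W
  refine List.Perm.prod_eq' (h.map _) ?_
  rw [List.pairwise_map]
  rw [List.nodup_flatten] at hn
  exact hn.2.imp (fun h => formPerm_commute h)

lemma flatten_perm {L L' : List (List X)} (h : L.Perm L') : L.flatten.Perm L'.flatten :=
  h.flatten

lemma formPerm_join (l1 l2 : List X) (z : X) :
    List.formPerm (l1 ++ [z]) * List.formPerm (z :: l2) = List.formPerm (l1 ++ z :: l2) := by
  induction l1 with
  | nil => simp
  | cons x l1 ih =>
    cases l1 with
    | nil => simp
    | cons y l1 =>
      simp only [List.cons_append, List.formPerm_cons_cons] at ih ⊢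
      rw [mul_assoc, ih]

lemma formPerm_rot (s t : List X) (h : (s ++ t).Nodup) :
    List.formPerm (s ++ t) = List.formPerm (t ++ s) := by
  apply List.formPerm_eq_of_isRotated h
  exact List.isRotated_append

lemma merge_aux (u v : X) (l1 l2 : List X) (h : ((u :: l1) ++ (v :: l2)).Nodup) :
    List.formPerm (u :: l1) * List.formPerm (v :: l2) * swap u v
      = List.formPerm (l1 ++ u :: (l2 ++ [v])) := by
  have h1 : (u :: l1).Nodup := h.of_append_left
  have h2 : (v :: l2).Nodup := h.of_append_right
  have hu : u ∉ l2 := by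
    intro hh
    have := List.disjoint_of_nodup_append h
    exact this (List.mem_cons_self) (List.mem_cons_of_mem _ hh)
  have huv : u ≠ v := by
    intro hh
    have := List.disjoint_of_nodup_append h
    exact this (List.mem_cons_self) (hh ▸ List.mem_cons_self)
  have e1 : List.formPerm (u :: l1) = List.formPerm (l1 ++ [u]) := formPerm_rot [u] l1 h1
  have e2 : List.formPerm (v :: l2) = List.formPerm (l2 ++ [v]) := formPerm_rot [v] l2 h2
  have e3 : swap u v = List.formPerm [v, u] := by rw [List.formPerm_pair, swap_comm]
  have e4 : List.formPerm (l2 ++ v :: [u]) = List.formPerm (u :: (l2 ++ [v])) := by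
    have := formPerm_rot (l2 ++ [v]) [u] (by
      rw [List.nodup_append]
      refine ⟨?_, by simp, ?_⟩
      · exact (List.perm_append_comm (l₁ := [v]) (l₂ := l2)).nodup_iff.1 h2
      · intro a ha b hb
        simp at hb ha
        subst hb
        rintro rfl
        rcases ha with ha | ha
        · exact hu ha
        · exact huv ha)
    simpa using this
  rw [mul_assoc, e2, e3, formPerm_join, e4, e1, formPerm_join]

lemma merge_W (c1 c2 : List X) (L : List (List X)) (h : (c1 :: c2 :: L).flatten.Nodup)
    (u v : X) (hu : u ∈ c1) (hv : v ∈ c2) :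
    ∃ c : List X, c.Perm (c1 ++ c2) ∧ W (c1 :: c2 :: L) * swap u v = W (c :: L) := by
  obtain ⟨s, t, rfl⟩ := List.append_of_mem hu
  obtain ⟨s', t', rfl⟩ := List.append_of_mem hv
  simp only [List.flatten_cons] at h
  rw [← List.append_assoc] at h
  have h12 := h.of_append_left
  have hd := List.disjoint_of_nodup_append h
  have n1 := h12.of_append_left
  have n2 := h12.of_append_right
  have p1 : (s ++ u :: t).Perm (u :: (t ++ s)) := by
    have := List.perm_append_comm (l₁ := s) (l₂ := u :: t)
    simpa using this
  have p2 : (s' ++ v :: t').Perm (v :: (t' ++ s')) := by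
    have := List.perm_append_comm (l₁ := s') (l₂ := v :: t')
    simpa using this
  have hWu : W L u = u := W_apply_of_notMem _ _ (hd (by simp))
  have hWv : W L v = v := W_apply_of_notMem _ _ (hd (by simp))
  refine ⟨(t ++ s) ++ u :: ((t' ++ s') ++ [v]), ?_, ?_⟩
  · refine List.Perm.trans ?_ (p1.append p2).symm
    refine List.perm_middle.trans ?_
    simp only [List.cons_append]
    refine List.Perm.cons _ ?_
    refine List.Perm.append_left _ ?_
    exact List.perm_append_comm (l₁ := t' ++ s') (l₂ := [v])
  · rw [W_cons, W_cons, W_cons, ← merge_aux]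
    · rw [formPerm_rot s (u :: t) n1, formPerm_rot s' (v :: t') n2]
      simp only [List.cons_append]
      simp only [mul_assoc]
      rw [mul_swap_eq_swap_mul, hWu, hWv]
    · exact (p1.append p2).nodup_iff.1 h12

/-- three elements on a cycle: one orientation of the 3-cycle keeps it a cycle -/
lemma three_aux (l : List X) (hl : l.Nodup) (u v w : X) (hu : u ∈ l) (hv : v ∈ l) (hw : w ∈ l)
    (huv : u ≠ v) (huw : u ≠ w) (hvw : v ≠ w) :
    ∃ u' v', ((u' = u ∧ v' = v) ∨ (u' = v ∧ v' = u)) ∧ ∃ l' : List X, l'.Perm l ∧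
      l.formPerm * swap u' v' * swap v' w = l'.formPerm := by
  -- rotate so that `l = l1 ++ u :: (l2 ++ [v])`
  obtain ⟨l1, l2, hp, hf⟩ : ∃ l1 l2 : List X, (l1 ++ u :: (l2 ++ [v])).Perm l ∧
      l.formPerm = List.formPerm (l1 ++ u :: (l2 ++ [v])) := by
    obtain ⟨s, t, rfl⟩ := List.append_of_mem hv
    have e : List.formPerm (s ++ v :: t) = List.formPerm ((t ++ s) ++ [v]) := by
      have := formPerm_rot (s ++ [v]) t (by simpa using hl)
      simpa using this
    have p : ((t ++ s) ++ [v]).Perm (s ++ v :: t) := by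
      have := List.perm_append_comm (l₁ := t) (l₂ := s ++ [v])
      simpa using this
    have : u ∈ t ++ s := by
      simp at hu ⊢
      tauto
    obtain ⟨a, b, hab⟩ := List.append_of_mem this
    refine ⟨a, b, ?_, ?_⟩
    · rw [hab] at p
      simpa using p
    · rw [e, hab]; simp
  have hn : (l1 ++ u :: (l2 ++ [v])).Nodup := hp.nodup_iff.2 hl
  have hn' : ((u :: l1) ++ (v :: l2)).Nodup := by
    refine (List.Perm.nodup_iff ?_).1 hn
    refine List.perm_middle.trans ?_
    simp only [List.cons_append]
    refine List.Perm.cons _ (List.Perm.append_left _ ?_)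
    exact List.perm_append_comm (l₁ := l2) (l₂ := [v])
  have hpp : ((u :: l1) ++ (v :: l2)).Perm l := by
    refine List.Perm.trans ?_ hp
    refine List.Perm.symm ?_
    refine List.perm_middle.trans ?_
    simp only [List.cons_append]
    refine List.Perm.cons _ (List.Perm.append_left _ ?_)
    exact List.perm_append_comm (l₁ := l2) (l₂ := [v])
  have key : l.formPerm * swap u v = List.formPerm (u :: l1) * List.formPerm (v :: l2) := by
    rw [hf, ← merge_aux u v l1 l2 hn', mul_assoc, swap_mul_self, mul_one]
  have hw' : w ∈ u :: l1 ∨ w ∈ v :: l2 := by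
    rw [← List.mem_append]; exact hpp.mem_iff.2 hw
  have hn2 : ((v :: l2) ++ (u :: l1)).Nodup := (List.perm_append_comm).nodup_iff.1 hn'
  rcases hw' with hw' | hw'
  · refine ⟨u, v, Or.inl ⟨rfl, rfl⟩, ?_⟩
    obtain ⟨c, hc, he⟩ := merge_W (v :: l2) (u :: l1) [] (by simpa using hn2) v w (by simp) hw'
    refine ⟨c, (hc.trans List.perm_append_comm).trans hpp, ?_⟩
    rw [key]
    simp only [W_cons, W_nil, mul_one] at he
    rw [← he, (formPerm_commute (List.disjoint_of_nodup_append hn')).eq]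
  · refine ⟨v, u, Or.inr ⟨rfl, rfl⟩, ?_⟩
    obtain ⟨c, hc, he⟩ := merge_W (u :: l1) (v :: l2) [] (by simpa using hn') u w (by simp) hw'
    refine ⟨c, hc.trans hpp, ?_⟩
    rw [swap_comm v u, key]
    simp only [W_cons, W_nil, mul_one] at he
    rw [← he]

lemma split_len (L : List (List X)) (x : ℕ) (b : Multiset ℕ)
    (h : ((L.map List.length : List ℕ) : Multiset ℕ) = x ::ₘ b) :
    ∃ c L0, L.Perm (c :: L0) ∧ c.length = x ∧ ((L0.map List.length : List ℕ) : Multiset ℕ) = b := by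
  have hx : x ∈ L.map List.length := by
    have : x ∈ ((L.map List.length : List ℕ) : Multiset ℕ) := by rw [h]; simp
    simpa using this
  obtain ⟨c, hc, rfl⟩ := List.mem_map.1 hx
  refine ⟨c, L.erase c, List.perm_cons_erase hc, rfl, ?_⟩
  have := (List.perm_cons_erase hc).map List.length
  rw [← Multiset.coe_eq_coe, h] at this
  simp only [List.map_cons, ← Multiset.cons_coe] at this
  exact ((Multiset.cons_inj_right _).1 this).symm

end lists

/-- `S m a b` : one step, multiplication by an `(m+1)`-cycle, from cycle type `a` to `b`. -/
def S (m : ℕ) (a b : Multiset ℕ) : Prop :=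
  ∃ (L1 L2 : List (List ℕ)) (l : List ℕ),
    L1.flatten.Nodup ∧ L1.flatten.Perm L2.flatten ∧ l ⊆ L1.flatten ∧ l.Nodup ∧
    l.length = m + 1 ∧ W L1 * l.formPerm = W L2 ∧
    ((L1.map List.length : List ℕ) : Multiset ℕ) = a ∧
    ((L2.map List.length : List ℕ) : Multiset ℕ) = b ∧ [] ∉ L1 ∧ [] ∉ L2

/-- as `S`, with every cycle meeting the `(m+1)`-cycle (so the group is transitive). -/
def Q (m : ℕ) (a b : Multiset ℕ) : Prop :=
  ∃ (L1 L2 : List (List ℕ)) (l : List ℕ),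
    L1.flatten.Nodup ∧ L1.flatten.Perm L2.flatten ∧ l ⊆ L1.flatten ∧ l.Nodup ∧
    l.length = m + 1 ∧ W L1 * l.formPerm = W L2 ∧
    ((L1.map List.length : List ℕ) : Multiset ℕ) = a ∧
    ((L2.map List.length : List ℕ) : Multiset ℕ) = b ∧
    (∀ c ∈ L1, ∃ x ∈ l, x ∈ c) ∧ (∀ c ∈ L2, ∃ x ∈ l, x ∈ c)

lemma Q.toS {m : ℕ} {a b : Multiset ℕ} (h : Q m a b) : S m a b := by
  obtain ⟨L1, L2, l, h1, h2, h3, h4, h5, h6, h7, h8, h9, h10⟩ := h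
  refine ⟨L1, L2, l, h1, h2, h3, h4, h5, h6, h7, h8, ?_, ?_⟩
  · intro h; obtain ⟨x, _, hx⟩ := h9 _ h; simp at hx
  · intro h; obtain ⟨x, _, hx⟩ := h10 _ h; simp at hx

lemma Q.symm {m : ℕ} {a b : Multiset ℕ} (h : Q m a b) : Q m b a := by
  obtain ⟨L1, L2, l, h1, h2, h3, h4, h5, h6, h7, h8, h9, h10⟩ := h
  refine ⟨L2, L1, l.reverse, h2.nodup_iff.1 h1, h2.symm, ?_, ?_, ?_, ?_, h8, h7, ?_, ?_⟩
  · intro x hx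
    exact h2.mem_iff.1 (h3 (by simpa using hx))
  · simpa using h4
  · simpa using h5
  · rw [List.formPerm_reverse, ← h6]; simp
  · simpa using h10
  · simpa using h9

lemma Q.base {c : ℕ} (hc : 0 < c) : Q 0 {c} {c} := by
  refine ⟨[List.range c], [List.range c], [0], ?_, List.Perm.refl _, ?_, by simp, by simp,
    by simp, by simp, by simp, ?_, ?_⟩
  · simpa using List.nodup_range
  · simpa using hc
  · simpa using hc
  · simpa using hc

lemma exists_bound (l : List ℕ) : ∃ N, ∀ n ∈ l, n < N := by
  induction l with
  | nil => exact ⟨0, by simp⟩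
  | cons x l ih =>
    obtain ⟨N, hN⟩ := ih
    refine ⟨max N (x + 1), ?_⟩
    intro n hn
    rcases List.mem_cons.1 hn with rfl | hn
    · simp
    · exact lt_max_of_lt_left (hN _ hn)

/-- adjoining a spectator cycle -/
lemma S.add_cycle {m : ℕ} {a b : Multiset ℕ} (h : S m a b) {x : ℕ} (hx : 0 < x) :
    S m (x ::ₘ a) (x ::ₘ b) := by
  obtain ⟨L1, L2, l, h1, h2, h3, h4, h5, h6, h7, h8, h9, h10⟩ := h
  obtain ⟨N, hN⟩ := exists_bound L1.flatten
  refine ⟨List.range' N x :: L1, List.range' N x :: L2, l, ?_, ?_, ?_, h4, h5, ?_, ?_, ?_, ?_, ?_⟩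
  · rw [List.flatten_cons, List.nodup_append]
    refine ⟨List.nodup_range', h1, ?_⟩
    intro a ha b hb
    have := hN b hb
    simp at ha
    omega
  · exact List.Perm.append_left _ h2
  · intro y hy
    simp only [List.flatten_cons, List.mem_append]
    exact Or.inr (h3 hy)
  · rw [W_cons, W_cons, mul_assoc, h6]
  · simp [← Multiset.cons_coe, h7]
  · simp [← Multiset.cons_coe, h8]
  · simp only [List.mem_cons, not_or]
    refine ⟨?_, h9⟩
    intro hh; have := congrArg List.length hh; simp at this; omega
  · simp only [List.mem_cons, not_or]
    refine ⟨?_, h10⟩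
    intro hh; have := congrArg List.length hh; simp at this; omega

/-- attaching a leaf -/
lemma Q.leaf {m : ℕ} {a b : Multiset ℕ} {y : ℕ} (h : Q m a (y ::ₘ b)) {x : ℕ} (hx : 0 < x) :
    Q (m + 1) (x ::ₘ a) ((x + y) ::ₘ b) := by
  obtain ⟨L1, L2, l, h1, h2, h3, h4, h5, h6, h7, h8, h9, h10⟩ := h
  obtain ⟨N, hN⟩ := exists_bound L1.flatten
  obtain ⟨c, L0, hp, hc, hb⟩ := split_len L2 y b h8
  have hnd2 := h2.nodup_iff.1 h1
  obtain ⟨v, hvl, hvc⟩ := h10 c (hp.mem_iff.2 (by simp))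
  set r := List.range' N x with hr
  have hNr : N ∈ r := by simp [hr]; omega
  have hrd : ∀ z ∈ r, z ∉ L1.flatten := by
    intro z hz hz'
    have := hN z hz'
    simp [hr] at hz
    omega
  have n1 : (r :: L1).flatten.Nodup := by
    rw [List.flatten_cons, List.nodup_append]
    refine ⟨List.nodup_range', h1, ?_⟩
    rintro a ha b hb rfl
    exact hrd a ha hb
  have pp : (r :: L1).flatten.Perm (r :: c :: L0).flatten :=
    List.Perm.append_left _ (h2.trans hp.flatten)
  have n2 : (r :: c :: L0).flatten.Nodup := pp.nodup_iff.1 n1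
  obtain ⟨c', hc', hW⟩ := merge_W r c L0 n2 N v hNr hvc
  have hNl : N ∉ l := fun hh => hrd N hNr (h3 hh)
  obtain ⟨s, t, hst⟩ := List.append_of_mem hvl
  have hlperm : l.Perm (t ++ s ++ [v]) := by
    rw [hst]
    have := (List.perm_append_comm (l₁ := s ++ [v]) (l₂ := t))
    simpa using this
  have hlf : l.formPerm = List.formPerm (t ++ s ++ [v]) := by
    rw [hst]
    have := formPerm_rot (s ++ [v]) t (by rw [hst] at h4; simpa using h4)
    simpa using this
  have hlN : (t ++ s ++ [v, N]).Perm (N :: l) := by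
    have : (t ++ s ++ [v, N]) = (t ++ s ++ [v]) ++ [N] := by simp
    rw [this]
    refine (List.perm_append_singleton _ _).trans ?_
    exact hlperm.symm.cons _
  refine ⟨r :: L1, c' :: L0, t ++ s ++ [v, N], n1, ?_, ?_, ?_, ?_, ?_, ?_, ?_, ?_, ?_⟩
  · refine pp.trans ?_
    simp only [List.flatten_cons]
    rw [← List.append_assoc]
    exact hc'.symm.append_right _
  · intro z hz
    rw [hlN.mem_iff] at hz
    simp only [List.flatten_cons, List.mem_append]
    rcases List.mem_cons.1 hz with rfl | hz
    · exact Or.inl hNr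
    · exact Or.inr (h3 hz)
  · rw [hlN.nodup_iff]
    exact List.nodup_cons.2 ⟨hNl, h4⟩
  · rw [hlN.length_eq]; simp [h5]
  · rw [← hW, W_cons, W_cons r]
    have e : W L1 * l.formPerm = W (c :: L0) := by
      rw [h6]; exact W_perm hp hnd2
    rw [← e, hlf]
    have := formPerm_join (t ++ s) [N] v
    rw [List.formPerm_pair, swap_comm] at this
    rw [← this]
    simp only [mul_assoc]
  · simp [← Multiset.cons_coe, h7, hr]
  · simp [← Multiset.cons_coe, hb, hc'.length_eq, hr, hc]
  · intro z hz
    rcases List.mem_cons.1 hz with rfl | hz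
    · exact ⟨N, by simp, hNr⟩
    · obtain ⟨x, hx, hx'⟩ := h9 z hz
      exact ⟨x, hlN.mem_iff.2 (by simp [hx]), hx'⟩
  · intro z hz
    rcases List.mem_cons.1 hz with rfl | hz
    · exact ⟨N, by simp, hc'.mem_iff.2 (by simp [hNr])⟩
    · obtain ⟨x, hx, hx'⟩ := h10 z (hp.mem_iff.2 (by simp [hz]))
      exact ⟨x, hlN.mem_iff.2 (by simp [hx]), hx'⟩

/-- gluing three cycles -/
lemma Q.glue {m : ℕ} {a b : Multiset ℕ} {x y z : ℕ} (h : Q m a (x ::ₘ y ::ₘ z ::ₘ b)) :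
    Q m a ((x + y + z) ::ₘ b) := by
  obtain ⟨L1, L2, l, h1, h2, h3, h4, h5, h6, h7, h8, h9, h10⟩ := h
  obtain ⟨c1, L20, hp1, hc1, hb1⟩ := split_len L2 _ _ h8
  obtain ⟨c2, L21, hp2, hc2, hb2⟩ := split_len L20 _ _ hb1
  obtain ⟨c3, L0, hp3, hc3, hb3⟩ := split_len L21 _ _ hb2
  have hp : L2.Perm (c1 :: c2 :: c3 :: L0) :=
    hp1.trans ((hp2.trans (hp3.cons _)).cons _)
  have hnd2 := h2.nodup_iff.1 h1
  obtain ⟨u, hul, huc⟩ := h10 c1 (hp.mem_iff.2 (by simp))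
  obtain ⟨v, hvl, hvc⟩ := h10 c2 (hp.mem_iff.2 (by simp))
  obtain ⟨w, hwl, hwc⟩ := h10 c3 (hp.mem_iff.2 (by simp))
  have hnd : (c1 :: c2 :: c3 :: L0).flatten.Nodup := hp.flatten.nodup_iff.1 hnd2
  have hdis := (List.nodup_flatten.1 hnd).2
  simp only [List.pairwise_cons] at hdis
  have huv : u ≠ v := by
    rintro rfl; exact hdis.1 c2 (by simp) huc hvc
  have huw : u ≠ w := by
    rintro rfl; exact hdis.1 c3 (by simp) huc hwc
  have hvw : v ≠ w := by
    rintro rfl; exact hdis.2.1 c3 (by simp) hvc hwc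
  obtain ⟨u', v', huv', l', hl', hform⟩ := three_aux l h4 u v w hul hvl hwl huv huw hvw
  have main : ∃ c, c.Perm (c1 ++ c2 ++ c3) ∧
      W (c1 :: c2 :: c3 :: L0) * swap u' v' * swap v' w = W (c :: L0) := by
    obtain ⟨c, hc, hcW⟩ := merge_W c1 c2 (c3 :: L0) hnd u v huc hvc
    have hv' : v' ∈ c := by
      rw [hc.mem_iff]
      rcases huv' with ⟨-, rfl⟩ | ⟨-, rfl⟩ <;> simp [huc, hvc]
    have e : swap u' v' = swap u v := by
      rcases huv' with ⟨rfl, rfl⟩ | ⟨rfl, rfl⟩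
      · rfl
      · exact swap_comm _ _
    have hn3 : (c :: c3 :: L0).flatten.Nodup := by
      simp only [List.flatten_cons] at hnd ⊢
      rw [← List.append_assoc] at hnd
      exact (hc.append_right _).nodup_iff.2 hnd
    obtain ⟨c', hc', hcW'⟩ := merge_W c c3 L0 hn3 v' w hv' hwc
    refine ⟨c', hc'.trans (hc.append_right _), ?_⟩
    rw [e, hcW, hcW']
  obtain ⟨c, hc, hcW⟩ := main
  refine ⟨L1, c :: L0, l', h1, ?_, ?_, ?_, ?_, ?_, h7, ?_, ?_, ?_⟩
  · refine (h2.trans hp.flatten).trans ?_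
    simp only [List.flatten_cons]
    rw [← List.append_assoc, ← List.append_assoc]
    exact hc.symm.append_right _
  · intro z hz; exact h3 (hl'.mem_iff.1 hz)
  · exact hl'.nodup_iff.2 h4
  · rw [hl'.length_eq, h5]
  · rw [← hcW, ← hform, ← W_perm hp hnd2, ← h6]
    simp only [mul_assoc]
  · simp [← Multiset.cons_coe, hb3, hc.length_eq, hc1, hc2, hc3, add_assoc]
  · intro z hz
    obtain ⟨x, hx, hx'⟩ := h9 z hz
    exact ⟨x, hl'.mem_iff.2 hx, hx'⟩
  · intro z hz
    rcases List.mem_cons.1 hz with rfl | hz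
    · exact ⟨u, hl'.mem_iff.2 hul, hc.mem_iff.2 (by simp [huc])⟩
    · obtain ⟨x, hx, hx'⟩ := h10 z (hp.mem_iff.2 (by simp [hz]))
      exact ⟨x, hl'.mem_iff.2 hx, hx'⟩

end BC

namespace BC

/-- all parts positive -/
def Pos (a : Multiset ℕ) : Prop := ∀ x ∈ a, 0 < x

lemma Pos.cons {a : Multiset ℕ} {x : ℕ} : Pos (x ::ₘ a) ↔ 0 < x ∧ Pos a := by
  simp [Pos]

lemma card_mul_le {a : Multiset ℕ} {k : ℕ} (h : ∀ x ∈ a, k ≤ x) : a.card * k ≤ a.sum := by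
  simpa using Multiset.card_nsmul_le_sum h

lemma le_card_mul {a : Multiset ℕ} {k : ℕ} (h : ∀ x ∈ a, x ≤ k) : a.sum ≤ a.card * k := by
  simpa using Multiset.sum_le_card_nsmul a k h

lemma Pos.card_le {a : Multiset ℕ} (h : Pos a) : a.card ≤ a.sum := by
  simpa using card_mul_le (k := 1) h

/-- genus 0, no slack -/
lemma B00 (m : ℕ) : ∀ a b : Multiset ℕ, Pos a → Pos b → a.sum = m + 1 → b.sum = m + 1 →
    a.card + b.card = m + 2 → Q m a b := by
  induction m with
  | zero =>
    intro a b ha hb sa sb hc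
    have h1 := ha.card_le
    have h2 := hb.card_le
    obtain ⟨x, rfl⟩ := Multiset.card_eq_one.1 (show a.card = 1 by omega)
    obtain ⟨y, rfl⟩ := Multiset.card_eq_one.1 (show b.card = 1 by omega)
    simp at sa sb
    subst sa sb
    exact Q.base one_pos
  | succ m ih =>
    have key : ∀ a b : Multiset ℕ, Pos a → Pos b → a.sum = m + 1 + 1 → b.sum = m + 1 + 1 →
      a.card + b.card = m + 1 + 2 → 1 ∈ a → Q (m + 1) a b := by
      intro a b ha hb sa sb hc h1
      obtain ⟨a', rfl⟩ := Multiset.exists_cons_of_mem h1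
      have hy : ∃ y ∈ b, 2 ≤ y := by
        by_contra hcon
        push Not at hcon
        have := le_card_mul (a := b) (k := 1) (fun x hx => by have := hcon x hx; omega)
        have ha' : a'.card = 0 := by simp at hc; omega
        rw [Multiset.card_eq_zero] at ha'
        subst ha'
        simp at sa
      obtain ⟨y, hy, hy2⟩ := hy
      obtain ⟨b', rfl⟩ := Multiset.exists_cons_of_mem hy
      rw [Pos.cons] at ha hb
      simp only [Multiset.sum_cons, Multiset.card_cons] at sa sb hc
      have := ih a' ((y - 1) ::ₘ b') ha.2 (Pos.cons.2 ⟨by omega, hb.2⟩) (by omega)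
        (by simp; omega) (by simp; omega)
      have := this.leaf one_pos
      rwa [show 1 + (y - 1) = y by omega] at this
    intro a b ha hb sa sb hc
    by_cases h1 : 1 ∈ a
    · exact key a b ha hb sa sb hc h1
    by_cases h2 : 1 ∈ b
    · exact (key b a hb ha sb sa (by omega) h2).symm
    have e1 := card_mul_le (a := a) (k := 2) (fun x hx => by
      have := ha x hx
      have : x ≠ 1 := by rintro rfl; exact h1 hx
      omega)
    have e2 := card_mul_le (a := b) (k := 2) (fun x hx => by
      have := hb x hx
      have : x ≠ 1 := by rintro rfl; exact h2 hx
      omega)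
    omega

/-- genus reduction by gluing -/
lemma glue_red (m g : ℕ) (P : ℕ → Prop)
    (h0 : ∀ a b : Multiset ℕ, Pos a → Pos b → a.sum = b.sum → P a.sum → m + 1 ≤ a.sum →
      a.card + b.card + 2 * g = m + 2 → Q m a b) (k : ℕ) :
    ∀ a b : Multiset ℕ, Pos a → Pos b → a.sum = b.sum → P a.sum → m + 1 ≤ a.sum →
      a.card + b.card + 2 * (g + k) = m + 2 → Q m a b := by
  induction k with
  | zero => exact h0
  | succ k ih =>
    have key : ∀ a b : Multiset ℕ, Pos a → Pos b → a.sum = b.sum → P a.sum → m + 1 ≤ a.sum →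
      a.card + b.card + 2 * (g + (k + 1)) = m + 2 → (∃ y ∈ b, 3 ≤ y) → Q m a b := by
      rintro a b ha hb sab hP hm hc ⟨y, hy, hy3⟩
      obtain ⟨b', rfl⟩ := Multiset.exists_cons_of_mem hy
      rw [Pos.cons] at hb
      simp only [Multiset.sum_cons, Multiset.card_cons] at sab hc
      have := ih a (1 ::ₘ 1 ::ₘ (y - 2) ::ₘ b') ha
        (Pos.cons.2 ⟨one_pos, Pos.cons.2 ⟨one_pos, Pos.cons.2 ⟨by omega, hb.2⟩⟩⟩)
        (by simp; omega) hP hm (by simp; omega)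
      have := this.glue
      rwa [show 1 + 1 + (y - 2) = y by omega] at this
    intro a b ha hb sab hP hm hc
    by_cases h2 : ∃ y ∈ b, 3 ≤ y
    · exact key a b ha hb sab hP hm hc h2
    by_cases h1 : ∃ y ∈ a, 3 ≤ y
    · exact (key b a hb ha sab.symm (sab ▸ hP) (sab ▸ hm) (by omega) h1).symm
    push Not at h1 h2
    have e1 := le_card_mul (a := a) (k := 2) (fun x hx => by have := h1 x hx; omega)
    have e2 := le_card_mul (a := b) (k := 2) (fun x hx => by have := h2 x hx; omega)
    omega

lemma rep_chain (c : ℕ) (hc : 3 ≤ c) (k : ℕ) :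
    Q (2 * (k + 1)) (Multiset.replicate (k + 1) c)
      (1 ::ₘ 1 ::ₘ (c - 2) ::ₘ Multiset.replicate k c) := by
  induction k with
  | zero =>
    have := (Q.base (c := c - 2) (by omega))
    have h1 := Q.leaf (a := {c - 2}) (b := 0) (y := c - 2) this one_pos
    have h2 := Q.leaf (b := 0) (y := 1 + (c - 2)) h1 one_pos
    have h3 := h2.symm
    rw [show 1 + (1 + (c - 2)) = c by omega] at h2
    simpa using h2.symm
  | succ k ih =>
    have ih' : Q (2 * (k + 1)) (Multiset.replicate (k + 1) c)
      (1 ::ₘ (1 ::ₘ (c - 2) ::ₘ Multiset.replicate k c)) := ih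
    have h1 := Q.leaf ih' (x := c - 1) (by omega)
    have h2 := Q.leaf h1.symm (x := 1) (by omega)
    have h3 := h2.symm
    rw [show 1 + (c - 1) = c by omega, show c - 1 + 1 = c by omega] at h3
    rw [Multiset.replicate_succ _ (k + 1), Multiset.replicate_succ _ k]
    have e : 2 * (k + 1 + 1) = 2 * (k + 1) + 1 + 1 := by ring
    rw [e]
    convert h3 using 1
    · rw [Multiset.replicate_succ]
    · rw [Multiset.cons_swap c 1, Multiset.cons_swap c (c - 2)]

lemma rep_rep (c : ℕ) (hc : 3 ≤ c) (k : ℕ) :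
    Q (2 * (k + 1)) (Multiset.replicate (k + 1) c) (Multiset.replicate (k + 1) c) := by
  have := (rep_chain c hc k).glue
  rwa [show 1 + 1 + (c - 2) = c by omega, ← Multiset.replicate_succ] at this

lemma slack0 (m g : ℕ) (a b : Multiset ℕ) (ha : Pos a) (hb : Pos b)
    (sab : a.sum = b.sum) (hs : m + 1 = a.sum) (hc : a.card + b.card + 2 * g = m + 2) :
    Q m a b := by
  have := glue_red m 0 (fun d => d = m + 1) (by
    intro a b ha hb sab hP _ hc
    exact B00 m a b ha hb hP (by omega) (by omega)) g a b ha hb sab hs.symm (by omega)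
    (by omega)
  exact this

lemma exists_max (a : Multiset ℕ) (h : a ≠ 0) : ∃ x ∈ a, ∀ z ∈ a, z ≤ x := by
  have hne : a.toFinset.Nonempty := by
    rw [Multiset.toFinset_nonempty]; exact h
  obtain ⟨x, hx, hm⟩ := a.toFinset.exists_max_image id hne
  exact ⟨x, by simpa using hx, fun z hz => hm z (by simpa using hz)⟩

/-- genus one -/
lemma B1 (m : ℕ) : ∀ a b : Multiset ℕ, Pos a → Pos b → a.sum = b.sum → m + 1 ≤ a.sum →
    a.card + b.card = m → Q m a b := by
  induction m with
  | zero =>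
    intro a b ha hb sab hm hc
    have : a = 0 := Multiset.card_eq_zero.1 (by omega)
    subst this
    simp at hm
  | succ m ih =>
    -- the leaf reduction
    have leafred : ∀ a b : Multiset ℕ, Pos a → Pos b → a.sum = b.sum → m + 1 + 1 ≤ a.sum →
      a.card + b.card = m + 1 → (∃ x ∈ a, ∃ y ∈ b, x < y ∧ m + 1 + x ≤ a.sum) →
      Q (m + 1) a b := by
      rintro a b ha hb sab hm hc ⟨x, hx, y, hy, hxy, hs⟩
      obtain ⟨a', rfl⟩ := Multiset.exists_cons_of_mem hx
      obtain ⟨b', rfl⟩ := Multiset.exists_cons_of_mem hy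
      rw [Pos.cons] at ha hb
      simp only [Multiset.sum_cons, Multiset.card_cons] at sab hc hs
      have := ih a' ((y - x) ::ₘ b') ha.2 (Pos.cons.2 ⟨by omega, hb.2⟩) (by simp; omega)
        (by omega) (by simp; omega)
      have := this.leaf ha.1
      rwa [show x + (y - x) = y by omega] at this
    have key : ∀ a b : Multiset ℕ, Pos a → Pos b → a.sum = b.sum → m + 1 + 1 ≤ a.sum →
      a.card + b.card = m + 1 →
      ∀ x ∈ a, (∀ z ∈ a, z ≤ x) → ∀ y ∈ b, (∀ z ∈ b, z ≤ y) → x ≤ y → Q (m + 1) a b := by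
      intro a b ha hb sab hm hc x hx hxm y hy hym hxy
      by_contra hQ
      obtain ⟨s, hs⟩ := Nat.exists_eq_add_of_le hm
      by_cases hs0 : s = 0
      · exact hQ (slack0 (m + 1) 1 a b ha hb sab (by omega) (by omega))
      have noL : ∀ x ∈ a, ∀ y ∈ b, x < y → s + 2 ≤ x := by
        intro x hx y hy hxy
        by_contra hlt
        exact hQ (leafred a b ha hb sab hm hc ⟨x, hx, y, hy, hxy, by omega⟩)
      have noL' : ∀ x ∈ b, ∀ y ∈ a, x < y → s + 2 ≤ x := by
        intro x hx y hy hxy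
        by_contra hlt
        exact hQ (leafred b a hb ha sab.symm (by omega) (by omega)
          ⟨x, hx, y, hy, hxy, by omega⟩).symm
      have noH : x ≤ s + 2 := by
        by_contra hlt
        apply hQ
        obtain ⟨a', rfl⟩ := Multiset.exists_cons_of_mem hx
        obtain ⟨b', rfl⟩ := Multiset.exists_cons_of_mem hy
        rw [Pos.cons] at ha hb
        simp only [Multiset.sum_cons, Multiset.card_cons] at sab hc hs
        obtain ⟨n, rfl⟩ : ∃ n, m = n + 1 := ⟨m - 1, by omega⟩
        have h0 := B00 n ((x - (s + 2)) ::ₘ a') ((y - (s + 2)) ::ₘ b')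
          (Pos.cons.2 ⟨by omega, ha.2⟩) (Pos.cons.2 ⟨by omega, hb.2⟩)
          (by simp; omega) (by simp; omega) (by simp; omega)
        have h1 := h0.symm.leaf (x := s + 1) (by omega)
        have h2 := h1.leaf (x := 1) (by omega)
        have h3 := h2.symm.glue
        rwa [show 1 + (s + 1) + (y - (s + 2)) = y by omega,
          show 1 + (s + 1 + (x - (s + 2))) = x by omega] at h3
      by_cases hxy' : x = y
      · subst hxy'
        have ea : ∀ z ∈ a, z = x := by
          intro z hz
          by_contra hne
          have h1 := hxm z hz
          have := noL z hz x hy (by omega)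
          omega
        have eb : ∀ z ∈ b, z = x := by
          intro z hz
          by_contra hne
          have h1 := hym z hz
          have := noL' z hz x hx (by omega)
          omega
        have ea' := Multiset.eq_replicate_card.2 ea
        have eb' := Multiset.eq_replicate_card.2 eb
        have sa : a.sum = a.card * x := by rw [ea']; simp
        have sb : b.sum = b.card * x := by rw [eb']; simp
        have hxpos := ha x hx
        have hcc : a.card = b.card := by
          have : a.card * x = b.card * x := by omega
          exact Nat.eq_of_mul_eq_mul_right hxpos this
        have hx3 : 3 ≤ x := by
          by_contra hlt
          have : a.card * x ≤ a.card * 2 := Nat.mul_le_mul_left _ (by omega)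
          omega
        have hapos : 0 < a.card := Multiset.card_pos_iff_exists_mem.2 ⟨x, hx⟩
        obtain ⟨k, hk⟩ : ∃ k, a.card = k + 1 := ⟨a.card - 1, by omega⟩
        apply hQ
        have := rep_rep x hx3 k
        rw [ea', eb', ← hcc, hk]
        rwa [show m + 1 = 2 * (k + 1) by omega]
      · have hlt : x < y := by omega
        have hxs := noL x hx y hy hlt
        have hxeq : x = s + 2 := by omega
        have ea : ∀ z ∈ a, z = x := by
          intro z hz
          have h1 := hxm z hz
          have := noL z hz y hy (by omega)
          omega
        have eb : ∀ z ∈ b, x ≤ z := by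
          intro z hz
          by_contra hne
          have := noL' z hz x hx (by omega)
          omega
        have ea' := Multiset.eq_replicate_card.2 ea
        have sa : a.sum = a.card * x := by rw [ea']; simp
        have hqp : b.card < a.card := by
          obtain ⟨b', rfl⟩ := Multiset.exists_cons_of_mem hy
          have h1 := card_mul_le (a := b') (k := x) (fun z hz => eb z (by simp [hz]))
          simp only [Multiset.sum_cons, Multiset.card_cons] at sab ⊢
          by_contra hge
          have : a.card * x ≤ (b'.card + 1) * x := Nat.mul_le_mul_right _ (by omega)
          have e : (b'.card + 1) * x = b'.card * x + x := by ring
          omega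
        have hbpos : 0 < b.card := Multiset.card_pos_iff_exists_mem.2 ⟨y, hy⟩
        have hsum : a.card + b.card + 1 + s = a.card * x := by omega
        subst hxeq
        nlinarith [Nat.mul_le_mul_left a.card (show 3 ≤ s + 2 by omega),
          mul_nonneg (Nat.zero_le s) (Nat.zero_le a.card), mul_le_mul (show 2 ≤ a.card by omega) (show 1 ≤ s by omega) (by omega) (by omega)]
    intro a b ha hb sab hm hc
    have hane : a ≠ 0 := by rintro rfl; simp at hm
    have hbne : b ≠ 0 := by rintro rfl; simp at sab; omega
    obtain ⟨x, hx, hxm⟩ := exists_max a hane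
    obtain ⟨y, hy, hym⟩ := exists_max b hbne
    rcases le_total x y with h | h
    · exact key a b ha hb sab hm hc x hx hxm y hy hym h
    · exact (key b a hb ha sab.symm (by omega) (by omega) y hy hym x hx hxm h).symm

/-- the one-cycle theorem in positive genus -/
lemma B (m g : ℕ) (hg : 0 < g) (a b : Multiset ℕ) (ha : Pos a) (hb : Pos b)
    (sab : a.sum = b.sum) (hs : m + 1 ≤ a.sum) (hc : a.card + b.card + 2 * g = m + 2) :
    Q m a b := by
  obtain ⟨k, rfl⟩ : ∃ k, g = 1 + k := ⟨g - 1, by omega⟩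
  exact glue_red m 1 (fun _ => True) (by
    intro a b ha hb sab _ hm hc
    exact B1 m a b ha hb sab hm (by omega)) k a b ha hb sab trivial hs hc

/-- merging everything -/
lemma merge_all (m : ℕ) : ∀ a : Multiset ℕ, Pos a → a.card = m + 1 → Q m a {a.sum} := by
  induction m with
  | zero =>
    intro a ha hc
    obtain ⟨x, rfl⟩ := Multiset.card_eq_one.1 hc
    simpa using Q.base (ha x (by simp))
  | succ m ih =>
    intro a ha hc
    obtain ⟨x, hx⟩ := Multiset.card_pos_iff_exists_mem.1 (show 0 < a.card by omega)
    obtain ⟨a', rfl⟩ := Multiset.exists_cons_of_mem hx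
    rw [Pos.cons] at ha
    have := ih a' ha.2 (by simpa using hc)
    have := Q.leaf (b := 0) (y := a'.sum) this ha.1
    simpa using this

lemma merge_two (m : ℕ) : ∀ a : Multiset ℕ, Pos a → a.card = m + 1 → m + 1 < a.sum →
    Q (m + 1) a {a.sum - 1, 1} := by
  induction m with
  | zero =>
    intro a ha hc hs
    obtain ⟨x, rfl⟩ := Multiset.card_eq_one.1 hc
    simp at hs
    have := Q.leaf (a := {x - 1}) (b := 0) (y := x - 1) (Q.base (c := x - 1) (by omega)) one_pos
    rw [show 1 + (x - 1) = x by omega] at this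
    have := this.symm
    rw [Multiset.cons_zero] at this
    have e : ({(Multiset.sum {x}) - 1, 1} : Multiset ℕ) = 1 ::ₘ {x - 1} := by
      simp only [Multiset.sum_singleton]
      exact Multiset.pair_comm _ _
    rw [e]
    exact this
  | succ m ih =>
    intro a ha hc hs
    have hex : ∃ x ∈ a, m + 1 + x < a.sum := by
      by_contra hcon
      push Not at hcon
      obtain ⟨x, hx⟩ := Multiset.card_pos_iff_exists_mem.1 (show 0 < a.card by omega)
      obtain ⟨a', rfl⟩ := Multiset.exists_cons_of_mem hx
      have h1 := hcon x hx
      rw [Pos.cons] at ha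
      simp only [Multiset.sum_cons, Multiset.card_cons] at *
      have h2 := ha.2.card_le
      obtain ⟨y, hy⟩ := Multiset.card_pos_iff_exists_mem.1 (show 0 < a'.card by omega)
      have h3 := hcon y (by simp [hy])
      obtain ⟨a'', rfl⟩ := Multiset.exists_cons_of_mem hy
      rw [Pos.cons] at ha
      simp only [Multiset.sum_cons, Multiset.card_cons] at *
      have h4 := ha.2.2.card_le
      omega
    obtain ⟨x, hx, hxs⟩ := hex
    obtain ⟨a', rfl⟩ := Multiset.exists_cons_of_mem hx
    rw [Pos.cons] at ha
    simp only [Multiset.sum_cons, Multiset.card_cons] at *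
    have := ih a' ha.2 (by omega) (by omega)
    have := Q.leaf (b := {1}) (y := a'.sum - 1) this ha.1
    rw [show x + (a'.sum - 1) = x + a'.sum - 1 by omega] at this
    exact this

/-- canonical targets -/
def tgt (d k : ℕ) : Multiset ℕ := if k % 2 = 0 then {d} else {d - 1, 1}

/-- one big step -/
lemma one_step (m : ℕ) (a : Multiset ℕ) (ha : Pos a) (hc : a.card ≤ m + 1) (hm : m + 1 ≤ a.sum)
    : Q m a (tgt a.sum (m + a.card + 1)) := by
  have hapos : 0 < a.card := by
    rcases Nat.eq_zero_or_pos a.card with h | h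
    · rw [Multiset.card_eq_zero] at h; subst h; simp at hm
    · exact h
  unfold tgt
  split_ifs with h
  · by_cases he : a.card = m + 1
    · exact merge_all m a ha he
    · refine B m ((m + 1 - a.card) / 2) (by omega) a _ ha (by simp [Pos]; omega) (by simp) hm ?_
      simp
      omega
  · by_cases he : a.card = m
    · obtain ⟨n, rfl⟩ : ∃ n, m = n + 1 := ⟨m - 1, by omega⟩
      exact merge_two n a ha he (by omega)
    · refine B m ((m - a.card) / 2) (by omega) a _ ha (by simp [Pos]; omega) (by simp; omega) hm ?_
      simp
      omega

lemma S.add {m : ℕ} {a b : Multiset ℕ} (h : S m a b) (c : Multiset ℕ) (hc : Pos c) :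
    S m (c + a) (c + b) := by
  induction c using Multiset.induction with
  | empty => simpa using h
  | cons x c ih =>
    rw [Pos.cons] at hc
    rw [Multiset.cons_add, Multiset.cons_add]
    exact (ih hc.2).add_cycle hc.1

/-- partial merging -/
lemma merge_step (m : ℕ) (a : Multiset ℕ) (ha : Pos a) (hc : m + 1 ≤ a.card) :
    ∃ c : Multiset ℕ, Pos c ∧ c.sum = a.sum ∧ c.card + m = a.card ∧ S m a c := by
  obtain ⟨t, r, rfl, htc⟩ : ∃ t r : Multiset ℕ, a = t + r ∧ t.card = m + 1 := by
    induction a using Quotient.inductionOn with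
    | _ l =>
      refine ⟨(l.take (m + 1) : List ℕ), (l.drop (m + 1) : List ℕ), ?_, ?_⟩
      · simp
      · simpa using hc
  have pt : Pos t := fun x hx => ha x (by simp [hx])
  have pr : Pos r := fun x hx => ha x (by simp [hx])
  have h1 := pt.card_le
  refine ⟨r + {t.sum}, ?_, ?_, ?_, ?_⟩
  · intro x hx
    simp at hx
    rcases hx with hx | rfl
    · exact pr x hx
    · omega
  · simp [add_comm]
  · simp; omega
  · rw [add_comm t r]
    exact (merge_all m t pt htc).toS.add r pr

end BC

namespace BC
open Equiv

section typ
variable {X : Type*} [DecidableEq X] [Fintype X]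

/-- full cycle type -/
def typ (σ : Perm X) : Multiset ℕ := σ.partition.parts

lemma formPerm_cycleType (c : List X) (h : c.Nodup) :
    c.formPerm.cycleType = Multiset.filter (fun n => 2 ≤ n) {c.length} := by
  by_cases h2 : 2 ≤ c.length
  · rw [(List.isCycle_formPerm h h2).cycleType, List.support_formPerm_of_nodup c h (by
      rintro x rfl; simp at h2), List.toFinset_card_of_nodup h,
      Multiset.filter_singleton, if_pos h2]
  · rw [(List.formPerm_eq_one_iff c h).2 (by omega), Perm.cycleType_one]
    rw [Multiset.filter_singleton, if_neg h2]
    rfl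

lemma cycleType_W (L : List (List X)) (h : L.flatten.Nodup) :
    (W L).cycleType = Multiset.filter (fun n => 2 ≤ n) ((L.map List.length : List ℕ) : Multiset ℕ) := by
  induction L with
  | nil => simp [W_nil]
  | cons c L ih =>
    rw [List.flatten_cons] at h
    have hd : Perm.Disjoint c.formPerm (W L) := by
      intro x
      by_cases hx : x ∈ c
      · right; exact W_apply_of_notMem _ _ (List.disjoint_of_nodup_append h hx)
      · left; exact List.formPerm_apply_of_notMem hx
    rw [W_cons, hd.cycleType_mul, ih h.of_append_right, formPerm_cycleType c h.of_append_left,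
      ← Multiset.filter_add]
    simp

lemma typ_W (L : List (List X)) (h : L.flatten.Nodup) (hc : ∀ x, x ∈ L.flatten) (he : [] ∉ L) :
    typ (W L) = ((L.map List.length : List ℕ) : Multiset ℕ) := by
  unfold typ
  rw [Perm.parts_partition, ← Perm.sum_cycleType, cycleType_W L h]
  set s : Multiset ℕ := ((L.map List.length : List ℕ) : Multiset ℕ) with hs
  have hsum : s.sum = Fintype.card X := by
    have : s.sum = L.flatten.length := by simp [hs, List.length_flatten]
    rw [this, ← List.toFinset_card_of_nodup h, ← Finset.card_univ]
    congr 1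
    ext x
    simpa using hc x
  have h1 : ∀ x ∈ Multiset.filter (fun n => ¬ 2 ≤ n) s, x = 1 := by
    intro x hx
    rw [Multiset.mem_filter] at hx
    have : x ≠ 0 := by
      rintro rfl
      have := hx.1
      simp [hs] at this
      exact he this
    omega
  have h2 := Multiset.eq_replicate_card.2 h1
  have h3 := Multiset.filter_add_not (fun n => 2 ≤ n) s
  have h4 : (Multiset.filter (fun n => ¬ 2 ≤ n) s).card
      = Fintype.card X - (Multiset.filter (fun n => 2 ≤ n) s).sum := by
    have e := congrArg Multiset.sum h3
    rw [Multiset.sum_add, hsum] at e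
    have e2 : (Multiset.filter (fun n => ¬ 2 ≤ n) s).sum
      = (Multiset.filter (fun n => ¬ 2 ≤ n) s).card := by
      conv_lhs => rw [h2]
      simp
    omega
  rw [← h4, ← h2, h3]

lemma typ_conj (σ κ : Perm X) : typ (κ * σ * κ⁻¹) = typ σ := by
  unfold typ
  rw [Perm.parts_partition, Perm.parts_partition, ← Perm.sum_cycleType, ← Perm.sum_cycleType,
    Perm.cycleType_conj]

lemma typ_inv (σ : Perm X) : typ (σ⁻¹) = typ σ := by
  unfold typ
  rw [Perm.parts_partition, Perm.parts_partition, ← Perm.sum_cycleType, ← Perm.sum_cycleType,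
    Perm.cycleType_inv]

lemma exists_conj {σ τ : Perm X} (h : typ σ = typ τ) : ∃ κ : Perm X, κ * σ * κ⁻¹ = τ := by
  have : σ.partition = τ.partition := Nat.Partition.ext h
  rw [← Perm.partition_eq_of_isConj, isConj_iff] at this
  exact this

end typ

section transport
variable {X Y : Type*} [DecidableEq X] [DecidableEq Y]

lemma formPerm_map (f : X → Y) (hf : Function.Injective f) (l : List X) (x : X) :
    (l.map f).formPerm (f x) = f (l.formPerm x) := by
  induction l with
  | nil => simp
  | cons a l ih =>
    cases l with
    | nil => simp
    | cons b l =>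
      simp only [List.map_cons, List.formPerm_cons_cons, Perm.mul_apply] at ih ⊢
      rw [ih, hf.swap_apply]

lemma W_map (f : X → Y) (hf : Function.Injective f) (L : List (List X)) (x : X) :
    W (L.map (List.map f)) (f x) = f (W L x) := by
  induction L with
  | nil => simp [W_nil]
  | cons c L ih => rw [List.map_cons, W_cons, W_cons, Perm.mul_apply, Perm.mul_apply, ih,
      formPerm_map f hf]

lemma lift_list (f : X → Y) (l : List Y) (h : ∀ y ∈ l, ∃ x, f x = y) :
    ∃ l' : List X, l'.map f = l := by
  induction l with
  | nil => exact ⟨[], rfl⟩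
  | cons y l ih =>
    obtain ⟨l', rfl⟩ := ih (fun z hz => h z (by simp [hz]))
    obtain ⟨x, rfl⟩ := h y (by simp)
    exact ⟨x :: l', rfl⟩

lemma lift_list2 (f : X → Y) (L : List (List Y)) (h : ∀ y ∈ L.flatten, ∃ x, f x = y) :
    ∃ L' : List (List X), L'.map (List.map f) = L := by
  apply lift_list
  intro l hl
  apply lift_list
  intro y hy
  exact h y (List.mem_flatten.2 ⟨l, hl, hy⟩)

lemma W_apply_mem (L : List (List X)) (h : L.flatten.Nodup) (c : List X) (hc : c ∈ L) (x : X)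
    (hx : x ∈ c) : W L x = c.formPerm x := by
  rw [W_perm (List.perm_cons_erase hc) h, W_cons, Perm.mul_apply, W_apply_of_notMem]
  have := ((List.perm_cons_erase hc).flatten).nodup_iff.1 h
  rw [List.flatten_cons] at this
  exact List.disjoint_of_nodup_append this hx

/-- permutations preserving the classes of an equivalence relation -/
def relSub (r : Setoid X) : Subgroup (Perm X) where
  carrier := {f | ∀ x, r x (f x)}
  mul_mem' := by
    intro f g hf hg x
    exact r.trans (hg x) (hf (g x))
  one_mem' := fun x => r.refl x
  inv_mem' := by
    intro f hf x
    have : r (f⁻¹ x) (f (f⁻¹ x)) := hf (f⁻¹ x)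
    rw [show f (f⁻¹ x) = x from f.apply_symm_apply x] at this
    exact r.symm this

lemma rel_of_list (r : Setoid X) (c : List X) (hc : c.Nodup) (h : c.formPerm ∈ relSub r)
    (x y : X) (hx : x ∈ c) (hy : y ∈ c) : r x y := by
  obtain ⟨n, hn⟩ := (hc.isCycleOn_formPerm).2 hx hy
  have := (relSub r).zpow_mem h n x
  rwa [hn] at this

end transport

/-- transitivity -/
def Tr {X : Type*} (σ : Perm X) (τs : List (Perm X)) : Prop :=
  ∀ r : Setoid X, σ ∈ relSub r → (∀ τ ∈ τs, τ ∈ relSub r) → ∀ x y, r x y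

lemma to_fin (L1 L2 : List (List ℕ)) (l : List ℕ)
    (h1 : L1.flatten.Nodup) (h2 : L1.flatten.Perm L2.flatten) (h3 : l ⊆ L1.flatten) (h4 : l.Nodup)
    (h6 : W L1 * l.formPerm = W L2) (e1 : [] ∉ L1) (e2 : [] ∉ L2) (d : ℕ)
    (hd : (((L1.map List.length : List ℕ) : Multiset ℕ)).sum = d) :
    ∃ (σ : Perm (Fin d)) (k : List (Fin d)), k.Nodup ∧ k.length = l.length ∧
      typ σ = ((L1.map List.length : List ℕ) : Multiset ℕ) ∧
      typ (σ * k.formPerm) = ((L2.map List.length : List ℕ) : Multiset ℕ) ∧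
      ((∀ c ∈ L1, ∃ x ∈ l, x ∈ c) → Tr σ [k.formPerm]) := by
  have hlen : L1.flatten.length = d := by
    rw [← hd]; simp [List.length_flatten]
  clear hd
  let f : Fin d → ℕ := fun i => L1.flatten.get (i.cast hlen.symm)
  have hf : Function.Injective f :=
    (List.nodup_iff_injective_get.1 h1).comp (Fin.cast_injective hlen.symm)
  have hsurj : ∀ y ∈ L1.flatten, ∃ x, f x = y := by
    intro y hy
    obtain ⟨i, hi⟩ := List.mem_iff_get.1 hy
    exact ⟨i.cast hlen, hi⟩
  have hmem : ∀ x, f x ∈ L1.flatten := fun x => List.get_mem _ _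
  clear_value f
  obtain ⟨K1, hK1⟩ := lift_list2 f L1 hsurj
  obtain ⟨K2, hK2⟩ := lift_list2 f L2 (fun y hy => hsurj y (h2.mem_iff.2 hy))
  obtain ⟨k, hk⟩ := lift_list f l (fun y hy => hsurj y (h3 hy))
  have fl1 : K1.flatten.map f = L1.flatten := by rw [← hK1, List.map_flatten]
  have fl2 : K2.flatten.map f = L2.flatten := by rw [← hK2, List.map_flatten]
  have n1 : K1.flatten.Nodup := List.Nodup.of_map f (fl1 ▸ h1)
  have n2 : K2.flatten.Nodup := List.Nodup.of_map f (fl2 ▸ (h2.nodup_iff.1 h1))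
  have c1 : ∀ x, x ∈ K1.flatten := by
    intro x
    have := hmem x
    rw [← fl1, List.mem_map_of_injective hf] at this
    exact this
  have c2 : ∀ x, x ∈ K2.flatten := by
    intro x
    have := h2.mem_iff.1 (hmem x)
    rw [← fl2, List.mem_map_of_injective hf] at this
    exact this
  have len1 : K1.map List.length = L1.map List.length := by
    rw [← hK1]; simp [Function.comp_def]
  have len2 : K2.map List.length = L2.map List.length := by
    rw [← hK2]; simp [Function.comp_def]
  have ne1 : [] ∉ K1 := by
    intro h; apply e1; rw [← hK1]; exact List.mem_map.2 ⟨[], h, rfl⟩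
  have ne2 : [] ∉ K2 := by
    intro h; apply e2; rw [← hK2]; exact List.mem_map.2 ⟨[], h, rfl⟩
  have hkn : k.Nodup := List.Nodup.of_map f (hk ▸ h4)
  have hW : W K1 * k.formPerm = W K2 := by
    ext x
    congr 1
    apply hf
    rw [Perm.mul_apply, ← W_map f hf, ← W_map f hf, ← formPerm_map f hf, hK1, hK2, hk, ← h6]
    rfl
  refine ⟨W K1, k, hkn, by rw [← hk]; simp, ?_, ?_, ?_⟩
  · rw [typ_W K1 n1 c1 ne1, len1]
  · rw [hW, typ_W K2 n2 c2 ne2, len2]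
  · intro hmeet r hr1 hr2
    have hr2' : k.formPerm ∈ relSub r := hr2 _ (by simp)
    have tok : ∀ x, ∃ y ∈ k, r x y := by
      intro x
      obtain ⟨c, hc, hx⟩ := List.mem_flatten.1 (c1 x)
      have hcf : c.map f ∈ L1 := by rw [← hK1]; exact List.mem_map.2 ⟨c, hc, rfl⟩
      obtain ⟨z, hzl, hzc⟩ := hmeet _ hcf
      obtain ⟨y, hyc, rfl⟩ := List.mem_map.1 hzc
      rw [← hk, List.mem_map_of_injective hf] at hzl
      refine ⟨y, hzl, rel_of_list r c ((List.nodup_flatten.1 n1).1 c hc) ?_ x y hx hyc⟩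
      intro w
      by_cases hw : w ∈ c
      · rw [← W_apply_mem K1 n1 c hc w hw]; exact hr1 w
      · rw [List.formPerm_apply_of_notMem hw]
    intro x y
    obtain ⟨x', hx', hxx⟩ := tok x
    obtain ⟨y', hy', hyy⟩ := tok y
    exact r.trans hxx (r.trans (rel_of_list r k hkn hr2' x' y' hx' hy') (r.symm hyy))

/-- a permutation that is a cycle of length `m + 1` -/
def IsC {X : Type*} [DecidableEq X] (m : ℕ) (τ : Perm X) : Prop :=
  ∃ l : List X, l.Nodup ∧ l.length = m + 1 ∧ τ = l.formPerm

lemma IsC.inv {X : Type*} [DecidableEq X] {m : ℕ} {τ : Perm X} (h : IsC m τ) : IsC m τ⁻¹ := by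
  obtain ⟨l, h1, h2, rfl⟩ := h
  exact ⟨l.reverse, by simpa using h1, by simpa using h2, (List.formPerm_reverse l).symm⟩

lemma IsC.conj {X : Type*} [DecidableEq X] {m : ℕ} {τ : Perm X} (h : IsC m τ) (κ : Perm X) :
    IsC m (κ * τ * κ⁻¹) := by
  obtain ⟨l, h1, h2, rfl⟩ := h
  refine ⟨l.map κ, h1.map κ.injective, by simpa using h2, ?_⟩
  ext x
  have := formPerm_map κ κ.injective l (κ⁻¹ x)
  rw [show κ (κ⁻¹ x) = x from κ.apply_symm_apply x] at this
  rw [this]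
  rfl

/-- chains -/
def Ch (t : Prop) (d : ℕ) (ms : List ℕ) (a b : Multiset ℕ) : Prop :=
  ∃ (σ : Perm (Fin d)) (τs : List (Perm (Fin d))), List.Forall₂ IsC ms τs ∧
    typ σ = a ∧ typ (σ * τs.prod) = b ∧ (t → Tr σ τs)

lemma S.toCh {d m : ℕ} {a b : Multiset ℕ} (h : S m a b) (hd : a.sum = d) : Ch False d [m] a b := by
  obtain ⟨L1, L2, l, h1, h2, h3, h4, h5, h6, rfl, rfl, h9, h10⟩ := h
  obtain ⟨σ, k, hk1, hk2, t1, t2, -⟩ := to_fin L1 L2 l h1 h2 h3 h4 h6 h9 h10 d hd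
  exact ⟨σ, [k.formPerm], by simpa using ⟨k, hk1, by omega, rfl⟩, t1, by simpa using t2, False.elim⟩

lemma Q.toCh {d m : ℕ} {a b : Multiset ℕ} (h : Q m a b) (hd : a.sum = d) : Ch True d [m] a b := by
  obtain ⟨L1, L2, l, h1, h2, h3, h4, h5, h6, rfl, rfl, h9, h10⟩ := h
  have e1 : [] ∉ L1 := by
    intro h; obtain ⟨x, _, hx⟩ := h9 _ h; simp at hx
  have e2 : [] ∉ L2 := by
    intro h; obtain ⟨x, _, hx⟩ := h10 _ h; simp at hx
  obtain ⟨σ, k, hk1, hk2, t1, t2, t3⟩ := to_fin L1 L2 l h1 h2 h3 h4 h6 e1 e2 d hd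
  exact ⟨σ, [k.formPerm], by simpa using ⟨k, hk1, by omega, rfl⟩, t1, by simpa using t2,
    fun _ => t3 h9⟩

lemma Ch.mono {t t' : Prop} {d : ℕ} {ms : List ℕ} {a b : Multiset ℕ} (h : Ch t d ms a b)
    (ht : t' → t) : Ch t' d ms a b := by
  obtain ⟨σ, τs, h1, h2, h3, h4⟩ := h
  exact ⟨σ, τs, h1, h2, h3, fun h => h4 (ht h)⟩

lemma Ch.symm {t : Prop} {d : ℕ} {ms : List ℕ} {a b : Multiset ℕ} (h : Ch t d ms a b) :
    Ch t d ms.reverse b a := by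
  obtain ⟨σ, τs, h1, h2, h3, h4⟩ := h
  refine ⟨σ * τs.prod, (τs.map (fun x => x⁻¹)).reverse, ?_, h3, ?_, ?_⟩
  · rw [List.forall₂_reverse_iff, List.forall₂_map_right_iff]
    exact h1.imp (fun _ _ h => h.inv)
  · rw [← List.prod_inv_reverse]; simpa using h2
  · intro ht r hr1 hr2
    have hτ : ∀ τ ∈ τs, τ ∈ relSub r := by
      intro τ hτ
      have := hr2 τ⁻¹ (by simpa using hτ)
      simpa using this
    refine h4 ht r ?_ hτ
    have : τs.prod ∈ relSub r := Subgroup.list_prod_mem _ hτ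
    exact (Subgroup.mul_mem_cancel_right _ this).1 hr1

lemma Ch.comp {t t' : Prop} {d : ℕ} {ms ms' : List ℕ} {a b c : Multiset ℕ} (h : Ch t d ms a b)
    (h' : Ch t' d ms' b c) : Ch (t ∨ t') d (ms ++ ms') a c := by
  obtain ⟨σ, τs, h1, h2, h3, h4⟩ := h
  obtain ⟨σ', τs', h1', h2', h3', h4'⟩ := h'
  obtain ⟨κ, hκ⟩ := exists_conj (h2'.trans h3.symm)
  have hprod : (τs'.map (fun x => κ * x * κ⁻¹)).prod = κ * τs'.prod * κ⁻¹ := by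
    have := map_list_prod (MulAut.conj κ) τs'
    simp only [MulAut.conj_apply] at this
    rw [this]
    rfl
  refine ⟨σ, τs ++ τs'.map (fun x => κ * x * κ⁻¹), ?_, h2, ?_, ?_⟩
  · refine List.rel_append h1 ?_
    rw [List.forall₂_map_right_iff]
    exact h1'.imp (fun _ _ h => h.conj κ)
  · have e : κ * σ' * κ⁻¹ * (κ * τs'.prod * κ⁻¹) = κ * (σ' * τs'.prod) * κ⁻¹ := by group
    rw [List.prod_append, ← mul_assoc, ← hκ, hprod, e, typ_conj, h3']
  · intro htt r hr1 hr2
    have hτ : ∀ τ ∈ τs, τ ∈ relSub r := fun τ hτ => hr2 τ (by simp [hτ])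
    rcases htt with ht | ht
    · exact h4 ht r hr1 hτ
    · have hsub : ∀ f : Perm (Fin d), κ * f * κ⁻¹ ∈ relSub r → f ∈ relSub (r.comap κ) := by
        intro f hf x
        have := hf (κ x)
        simpa [Setoid.comap_rel] using this
      have := h4' ht (r.comap κ) (by
          apply hsub
          rw [hκ]
          exact Subgroup.mul_mem _ hr1 (Subgroup.list_prod_mem _ hτ)) (by
          intro τ hτ'
          apply hsub
          apply hr2
          simp only [List.mem_append, List.mem_map]
          exact Or.inr ⟨τ, hτ', rfl⟩)
      intro x y
      have := this (κ⁻¹ x) (κ⁻¹ y)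
      simpa [Setoid.comap_rel] using this

lemma Ch.nil {d : ℕ} {a : Multiset ℕ} (ha : Pos a) (hd : a.sum = d) (hpos : 0 < d) :
    Ch (a = {d}) d [] a a := by
  have hc : 0 < a.card := by
    rcases Nat.eq_zero_or_pos a.card with h | h
    · rw [Multiset.card_eq_zero] at h; subst h; simp at hd; omega
    · exact h
  obtain ⟨n, hn⟩ : ∃ n, a.card = n + 1 := ⟨a.card - 1, by omega⟩
  obtain ⟨σ, τs, h1, h2, h3, h4⟩ := (merge_all n a ha hn).toCh hd
  refine ⟨σ, [], by simp, h2, by simpa using h2, ?_⟩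
  intro he r hr1 _
  have hn0 : n = 0 := by rw [he] at hn; simp at hn; omega
  subst hn0
  refine h4 trivial r hr1 ?_
  cases h1 with
  | cons hh ht =>
    cases ht
    obtain ⟨l, l1, l2, rfl⟩ := hh
    intro τ hτ
    simp only [List.mem_singleton] at hτ
    rw [hτ, (List.formPerm_eq_one_iff l l1).2 (by omega)]
    exact Subgroup.one_mem _

lemma tgt_congr {d k k' : ℕ} (h : k % 2 = k' % 2) : tgt d k = tgt d k' := by
  unfold tgt; rw [h]

lemma reach (d : ℕ) (hd : 0 < d) (ms : List ℕ) (hms : ∀ m ∈ ms, 1 ≤ m ∧ m + 1 ≤ d) :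
    ∀ a : Multiset ℕ, Pos a → a.sum = d → a.card ≤ ms.sum + 1 →
      Ch True d ms a (tgt d (ms.sum + a.card + 1)) := by
  induction ms with
  | nil =>
    intro a ha hs hc
    have hc1 : a.card = 1 := by
      rcases Nat.eq_zero_or_pos a.card with h | h
      · rw [Multiset.card_eq_zero] at h; subst h; simp at hs; omega
      · simp at hc; omega
    obtain ⟨x, rfl⟩ := Multiset.card_eq_one.1 hc1
    simp at hs
    subst hs
    have := Ch.nil ha (by simp) hd
    simpa [tgt] using this
  | cons m ms ih =>
    intro a ha hs hc
    have hm := hms m (by simp)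
    have ih' := ih (fun x hx => hms x (by simp [hx]))
    by_cases hcm : a.card ≤ m + 1
    · have h1 := (one_step m a ha hcm (by omega)).toCh hs
      rw [hs] at h1
      rcases Nat.mod_two_eq_zero_or_one (m + a.card + 1) with hk | hk
      · have e : tgt d (m + a.card + 1) = {d} := by simp [tgt, hk]
        rw [e] at h1
        have h2 := ih' {d} (by simpa [Pos] using hd) (by simp) (by simp)
        have h3 := (h1.comp h2).mono (t' := True) (by simp)
        rw [tgt_congr (k' := (m :: ms).sum + a.card + 1) (by simp; omega)] at h3
        exact h3
      · have e : tgt d (m + a.card + 1) = {d - 1, 1} := by simp [tgt, hk]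
        cases ms with
        | nil =>
          have : tgt d ([m].sum + a.card + 1) = tgt d (m + a.card + 1) := by simp
          rw [this]; exact h1
        | cons m' ms' =>
          rw [e] at h1
          have hm' := hms m' (by simp)
          have h2 := ih' {d - 1, 1} (by simp [Pos]; omega) (by simp; omega) (by simp; omega)
          have h3 := (h1.comp h2).mono (t' := True) (by simp)
          rw [tgt_congr (k' := (m :: m' :: ms').sum + a.card + 1) (by simp; omega)] at h3
          exact h3
    · obtain ⟨c, pc, sc, cc, hS⟩ := merge_step m a ha (by omega)
      simp at hc
      have h1 := hS.toCh hs
      have h2 := ih' c pc (by omega) (by omega)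
      have h3 := (h1.comp h2).mono (t' := True) (by simp)
      rw [tgt_congr (k' := (m :: ms).sum + a.card + 1) (by simp; omega)] at h3
      exact h3

lemma merge_ch (d : ℕ) (hd : 0 < d) (ms : List ℕ) :
    ∀ a : Multiset ℕ, Pos a → a.sum = d → ms.sum + 1 ≤ a.card →
      ∃ c : Multiset ℕ, Pos c ∧ c.sum = d ∧ c.card + ms.sum = a.card ∧ Ch False d ms a c := by
  induction ms with
  | nil =>
    intro a ha hs _
    exact ⟨a, ha, hs, by simp, (Ch.nil ha hs hd).mono False.elim⟩
  | cons m ms ih =>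
    intro a ha hs hc
    simp at hc
    obtain ⟨c, pc, sc, cc, hS⟩ := merge_step m a ha (by omega)
    obtain ⟨c', pc', sc', cc', hS'⟩ := ih c pc (by omega) (by omega)
    exact ⟨c', pc', sc', by simp; omega, ((hS.toCh hs).comp hS').mono False.elim⟩

/-- the Hurwitz-type theorem: two arbitrary types and several single cycles -/
lemma main_chain (d g : ℕ) (hd : 0 < d) (hg : 0 < g) (b : Multiset ℕ) (hb : Pos b) (sb : b.sum = d)
    (ms : List ℕ) (hms : ∀ m ∈ ms, 1 ≤ m ∧ m + 1 ≤ d) :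
    ∀ a : Multiset ℕ, Pos a → a.sum = d → a.card + b.card + 2 * g = ms.sum + 2 →
      Ch True d ms a b := by
  have cardpos : ∀ a : Multiset ℕ, a.sum = d → 0 < a.card := by
    intro a hs
    rcases Nat.eq_zero_or_pos a.card with h | h
    · rw [Multiset.card_eq_zero] at h; subst h; simp at hs; omega
    · exact h
  have hbc := cardpos b sb
  induction ms with
  | nil =>
    intro a ha sa hc
    have := cardpos a sa
    simp at hc; omega
  | cons m ms ih =>
    intro a ha sa hc
    have hac := cardpos a sa
    have hm := hms m (by simp)
    have hms' : ∀ m ∈ ms, 1 ≤ m ∧ m + 1 ≤ d := fun x hx => hms x (by simp [hx])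
    simp at hc
    by_cases hcm : m + 1 ≤ a.card
    · obtain ⟨c, pc, sc, cc, hS⟩ := merge_step m a ha hcm
      have h2 := ih hms' c pc (by omega) (by omega)
      exact ((hS.toCh sa).comp h2).mono (by simp)
    by_cases hq : b.card ≤ ms.sum + 1
    · have h1 := (one_step m a ha (by omega) (by omega)).toCh sa
      have h2 := (reach d hd ms.reverse (by simpa using hms') b hb sb (by simpa using hq)).symm
      rw [List.reverse_reverse, List.sum_reverse,
        tgt_congr (k' := m + a.card + 1) (by omega), ← sa] at h2
      rw [sa] at h1 h2
      exact (h1.comp h2).mono (by simp)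
    · obtain ⟨c, pc, sc, cc, h2⟩ := merge_ch d hd ms.reverse b hb sb (by
        rw [List.sum_reverse]; omega)
      rw [List.sum_reverse] at cc
      have h2 := h2.symm
      rw [List.reverse_reverse] at h2
      have h1 := (B m g hg a c ha pc (by omega) (by omega) (by omega)).toCh sa
      exact (h1.comp h2).mono (by simp)

end BC

namespace BC
open Equiv

section lift
variable {X : Type*} [DecidableEq X] {n : ℕ}

/-- cyclic shift of the sheets, with monodromy `F` after a full turn -/
def Pm (n : ℕ) (F : Perm X) : Perm (Fin (n + 1) × X) :=
  Equiv.prodShear (finRotate (n + 1)) (fun i => if i = Fin.last n then F else 1)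

/-- sheetwise permutation -/
def Fib (f : Fin (n + 1) → Perm X) : Perm (Fin (n + 1) × X) :=
  Equiv.prodShear (Equiv.refl _) f

lemma Fib_apply (f : Fin (n + 1) → Perm X) (i : Fin (n + 1)) (x : X) :
    Fib f (i, x) = (i, f i x) := rfl

lemma Pm_lt (F : Perm X) (i : ℕ) (h : i < n) (x : X) :
    Pm n F (⟨i, by omega⟩, x) = (⟨i + 1, by omega⟩, x) := by
  have : (⟨i, by omega⟩ : Fin (n + 1)) ≠ Fin.last n := by
    intro h'; have := congrArg Fin.val h'; simp at this; omega
  simp only [Pm, prodShear_apply, if_neg this, finRotate_of_lt h]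
  rfl

lemma Pm_last (F : Perm X) (x : X) : Pm n F (Fin.last n, x) = (0, F x) := by
  simp [Pm, prodShear_apply]

/-- blow up of a list -/
def blow (n : ℕ) (c : List X) : List (Fin (n + 1) × X) :=
  List.ofFn (fun t : Fin (c.length * (n + 1)) => (t.modNat, c.get t.divNat))

lemma blow_length (c : List X) : (blow n c).length = c.length * (n + 1) := by
  simp [blow]

lemma blow_aux {k i j : ℕ} (hi : i < n + 1) (hj : j < k) : i + (n + 1) * j < k * (n + 1) := by
  have : (n + 1) * (j + 1) ≤ (n + 1) * k := Nat.mul_le_mul_left _ hj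
  rw [mul_comm k]
  rw [mul_add] at this
  omega

lemma blow_get (w : List X) (i j : ℕ) (hi : i < n + 1) (hj : j < w.length)
    (h : i + (n + 1) * j < (blow n w).length) :
    (blow n w)[i + (n + 1) * j] = (⟨i, hi⟩, w[j]) := by
  simp only [blow, List.getElem_ofFn]
  ext1
  · apply Fin.ext
    simp [Fin.modNat, Nat.mod_eq_of_lt hi]
  · have e : (i + (n + 1) * j) / (n + 1) = j := by
      rw [Nat.add_mul_div_left _ _ (Nat.succ_pos n), Nat.div_eq_of_lt hi, zero_add]
    simp [Fin.divNat, e]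

lemma blow_nodup (c : List X) (hc : c.Nodup) : (blow n c).Nodup := by
  unfold blow
  rw [List.nodup_ofFn]
  intro s t h
  simp only [Prod.mk.injEq] at h
  have h2 := List.nodup_iff_injective_get.1 hc h.2
  apply finProdFinEquiv.symm.injective
  simp [h.1, h2]

lemma mem_blow (c : List X) (y : Fin (n + 1) × X) : y ∈ blow n c ↔ y.2 ∈ c := by
  constructor
  · intro h
    simp only [blow, List.mem_ofFn] at h
    obtain ⟨t, rfl⟩ := h
    exact List.get_mem _ _
  · intro h
    obtain ⟨j, hj, hx⟩ := List.mem_iff_getElem.1 h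
    have h' : y.1 + (n + 1) * j < (blow n c).length := by
      rw [blow_length]; exact blow_aux y.1.2 hj
    have := blow_get c y.1 j y.1.2 hj h'
    rw [hx] at this
    rw [show y = (⟨y.1, y.1.2⟩, y.2) from rfl, ← this]
    exact List.getElem_mem _

lemma blow_formPerm (c : List X) (hc : c.Nodup) (i : Fin (n + 1)) (x : X) (hx : x ∈ c) :
    (blow n c).formPerm (i, x) = Pm n c.formPerm (i, x) := by
  obtain ⟨j, hj, rfl⟩ := List.mem_iff_getElem.1 hx
  obtain ⟨i, hi⟩ := i
  have h' : i + (n + 1) * j < (blow n c).length := by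
    rw [blow_length]; exact blow_aux hi hj
  rw [← blow_get c i j hi hj h', List.formPerm_apply_getElem _ (blow_nodup c hc), blow_get c i j hi hj h']
  by_cases hin : i < n
  · rw [Pm_lt _ i hin, ← blow_get c (i + 1) j (by omega) hj (by
      rw [blow_length]; exact blow_aux (by omega) hj)]
    congr 1
    rw [Nat.mod_eq_of_lt]
    · omega
    · have := blow_aux (i := i + 1) (n := n) (by omega) hj
      rw [blow_length]
      omega
  · have : i = n := by omega
    subst this
    have hl : (⟨i, hi⟩ : Fin (i + 1)) = Fin.last i := rfl
    rw [hl, Pm_last, List.formPerm_apply_getElem _ hc]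
    have hj' : (j + 1) % c.length < c.length := Nat.mod_lt _ (by omega)
    have := blow_get c 0 ((j + 1) % c.length) (Nat.succ_pos i) hj' (by
      rw [blow_length]; exact blow_aux (by omega) hj')
    rw [show (0 : Fin (i + 1)) = ⟨0, Nat.succ_pos i⟩ from rfl, ← this]
    congr 1
    rw [blow_length, zero_add, mul_comm c.length, ← Nat.mul_mod_mul_left]
    congr 1
    ring

lemma Pm_W (L : List (List X)) (h : L.flatten.Nodup) (hc : ∀ x, x ∈ L.flatten) :
    (L.map (blow n)).flatten.Nodup ∧ W (L.map (blow n)) = Pm n (W L) := by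
  have hn : (L.map (blow n)).flatten.Nodup := by
    rw [List.nodup_flatten] at h ⊢
    refine ⟨?_, ?_⟩
    · intro l hl
      obtain ⟨c, hc, rfl⟩ := List.mem_map.1 hl
      exact blow_nodup c (h.1 c hc)
    · rw [List.pairwise_map]
      refine h.2.imp ?_
      intro c c' hcc y hy hy'
      rw [mem_blow] at hy hy'
      exact hcc hy hy'
  refine ⟨hn, ?_⟩
  apply Equiv.ext
  rintro ⟨i, x⟩
  obtain ⟨c, hcL, hx⟩ := List.mem_flatten.1 (hc x)
  rw [W_apply_mem _ hn (blow n c) (List.mem_map_of_mem hcL) _ ((mem_blow _ _).2 hx),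
    blow_formPerm c ((List.nodup_flatten.1 h).1 c hcL) i x hx]
  simp only [Pm, prodShear_apply]
  congr 1
  split_ifs
  · rw [W_apply_mem L h c hcL x hx]
  · rfl

lemma Pm_conj (F κ : Perm X) :
    Pm n (κ * F * κ⁻¹) = Fib (fun _ => κ) * Pm n F * (Fib (fun _ => κ))⁻¹ := by
  rw [eq_mul_inv_iff_mul_eq]
  apply Equiv.ext
  rintro ⟨i, x⟩
  simp only [Perm.mul_apply, Fib_apply]
  simp only [Pm, prodShear_apply]
  rw [Fib_apply]
  congr 1
  split_ifs <;> simp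

end lift

lemma exists_W {d : ℕ} (σ : Perm (Fin d)) : ∃ (L : List (List (Fin d))) (κ : Perm (Fin d)),
    L.flatten.Nodup ∧ (∀ x, x ∈ L.flatten) ∧ [] ∉ L ∧ σ = κ * W L * κ⁻¹ := by
  obtain ⟨s, hs⟩ := Quot.exists_rep (typ σ)
  change (s : Multiset ℕ) = typ σ at hs
  have hsum : s.sum = d := by
    have := σ.partition.parts_sum
    have e := Fintype.card_fin d
    rw [← Multiset.sum_coe, hs]; exact this.trans e
  have e1 := List.flatten_splitLengths (List.finRange d) s (by simp [hsum])
  have e2 := List.map_splitLengths_length (List.finRange d) s (by simp [hsum])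
  set L := s.splitLengths (List.finRange d)
  have h1 : L.flatten.Nodup := by rw [e1]; exact List.nodup_finRange d
  have h2 : ∀ x, x ∈ L.flatten := by rw [e1]; exact List.mem_finRange
  have h3 : [] ∉ L := by
    intro h
    have : 0 ∈ s := by rw [← e2]; exact List.mem_map.2 ⟨[], h, rfl⟩
    have h0 : 0 ∈ σ.partition.parts := by
      change 0 ∈ typ σ
      rw [← hs]; simpa using this
    exact absurd (σ.partition.parts_pos h0) (by simp)
  obtain ⟨κ, hκ⟩ := exists_conj (σ := W L) (τ := σ) (by rw [typ_W L h1 h2 h3, e2, hs])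
  exact ⟨L, κ, h1, h2, h3, hκ.symm⟩

lemma typ_Pm {d n : ℕ} (σ : Perm (Fin d)) : typ (Pm n σ) = (typ σ).map (fun k => (n + 1) * k) := by
  obtain ⟨L, κ, h1, h2, h3, rfl⟩ := exists_W σ
  obtain ⟨h4, h5⟩ := Pm_W (n := n) L h1 h2
  rw [Pm_conj, typ_conj, typ_conj, ← h5, typ_W _ h4, typ_W L h1 h2 h3]
  · rw [Multiset.map_coe, List.map_map, List.map_map]
    congr 2
    funext c
    simp [blow_length, mul_comm]
  · intro y
    obtain ⟨c, hcL, hx⟩ := List.mem_flatten.1 (h2 y.2)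
    exact List.mem_flatten.2 ⟨blow n c, List.mem_map_of_mem hcL, (mem_blow _ _).2 hx⟩
  · intro h
    obtain ⟨c, hc, hb⟩ := List.mem_map.1 h
    have := congrArg List.length hb
    rw [blow_length] at this
    simp at this
    exact h3 (this ▸ hc)

/-- telescoping: a shift with different sheet monodromies -/
lemma Pm_Fib {X : Type*} [DecidableEq X] {n : ℕ} (σ : Perm X) (T : List (Perm X)) (hT : T.length = n + 1) :
    Pm n σ * Fib (fun i : Fin (n + 1) => T[i]) =
      Fib (fun i : Fin (n + 1) => (T.take i).reverse.prod) * Pm n (σ * T.reverse.prod) *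
      (Fib (fun i : Fin (n + 1) => (T.take i).reverse.prod))⁻¹ := by
  have step : ∀ i (h : i < T.length), (T.take (i + 1)).reverse.prod = T[i] * (T.take i).reverse.prod := by
    intro i h
    rw [List.take_succ_eq_append_getElem h, List.reverse_append, List.prod_append,
      List.reverse_singleton, List.prod_singleton]
  rw [eq_mul_inv_iff_mul_eq]
  apply Equiv.ext
  rintro ⟨i, x⟩
  obtain ⟨i, hi⟩ := i
  simp only [Perm.mul_apply, Fib_apply]
  by_cases hin : i < n
  · rw [Pm_lt _ i hin, Pm_lt _ i hin, Fib_apply]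
    simp only [step i (by omega)]
    rfl
  · have : i = n := by omega
    subst this
    have hl : (⟨i, hi⟩ : Fin (i + 1)) = Fin.last i := rfl
    rw [hl, Pm_last, Pm_last, Fib_apply]
    have := step i (by omega)
    rw [← hT, List.take_length] at this
    simp only [this]
    simp

lemma typ_congr {X Y : Type*} [DecidableEq X] [Fintype X] [DecidableEq Y] [Fintype Y] (e : X ≃ Y)
    (σ : Perm X) : (e.permCongr σ).cycleType = σ.cycleType := by
  rw [← Perm.cycleType_extendDomain (e.trans (Equiv.Set.univ Y).symm) (g := σ)]
  congr 1

lemma cycleType_Fib {d n : ℕ} (m : Fin (n + 1) → ℕ) (hm : ∀ i, 0 < m i)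
    (τ : Fin (n + 1) → Perm (Fin d)) (h : ∀ i, IsC (m i) (τ i)) :
    (Fib τ).cycleType = Finset.univ.val.map (fun i => m i + 1) := by
  choose l h1 h2 h3 using h
  set L : List (List (Fin (n + 1) × Fin d)) :=
    (List.finRange (n + 1)).map (fun i => (l i).map (Prod.mk i)) with hL
  have hn : L.flatten.Nodup := by
    rw [List.nodup_flatten]
    constructor
    · intro c hc
      obtain ⟨i, _, rfl⟩ := List.mem_map.1 hc
      exact (h1 i).map (Prod.mk_right_injective i)
    · rw [hL, List.pairwise_map]
      refine (List.nodup_finRange (n + 1)).imp ?_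
      intro i j hij y hy hy'
      obtain ⟨_, _, rfl⟩ := List.mem_map.1 hy
      obtain ⟨_, _, h⟩ := List.mem_map.1 hy'
      exact hij (congrArg Prod.fst h).symm
  have hW : Fib τ = W L := by
    apply Equiv.ext
    rintro ⟨i, x⟩
    rw [Fib_apply, h3 i]
    by_cases hx : x ∈ l i
    · rw [W_apply_mem L hn ((l i).map (Prod.mk i)) (List.mem_map.2 ⟨i, List.mem_finRange i, rfl⟩) _
        (List.mem_map_of_mem hx), formPerm_map _ (Prod.mk_right_injective i)]
    · rw [List.formPerm_apply_of_notMem hx, W_apply_of_notMem]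
      intro h
      obtain ⟨c, hc, hxc⟩ := List.mem_flatten.1 h
      obtain ⟨j, _, rfl⟩ := List.mem_map.1 hc
      obtain ⟨z, hz, hzz⟩ := List.mem_map.1 hxc
      simp only [Prod.mk.injEq] at hzz
      obtain ⟨rfl, rfl⟩ := hzz
      exact hx hz
  rw [hW, cycleType_W L hn]
  have e : ((L.map List.length : List ℕ) : Multiset ℕ) = Finset.univ.val.map (fun i => m i + 1) := by
    rw [hL, List.map_map]
    have : (Finset.univ : Finset (Fin (n + 1))).val = (List.finRange (n + 1) : Multiset _) := rfl
    rw [this, Multiset.map_coe]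
    congr 2
    funext i
    simp [h2]
  rw [e, Multiset.filter_eq_self]
  intro k hk
  obtain ⟨i, _, rfl⟩ := Multiset.mem_map.1 hk
  have := hm i
  omega

lemma Pm_iter {X : Type*} [DecidableEq X] {n : ℕ} (F : Perm X) (i : ℕ) (h : i ≤ n) (x : X) :
    (Pm n F ^ i) (0, x) = (⟨i, by omega⟩, x) := by
  induction i with
  | zero => rfl
  | succ i ih => rw [pow_succ', Perm.mul_apply, ih (by omega), Pm_lt _ i (by omega)]

/-- transitivity of the lift -/
lemma lift_trans {X : Type*} [DecidableEq X] {n : ℕ} (σ : Perm X) (T : List (Perm X))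
    (hT : T.length = n + 1)
    (htr : Tr σ T) (G : Subgroup (Perm (Fin (n + 1) × X))) (h1 : Pm n σ ∈ G)
    (h2 : Fib (fun i : Fin (n + 1) => T[i]) ∈ G) (y z : Fin (n + 1) × X) : ∃ π ∈ G, π y = z := by
  let r : Setoid X :=
    { r := fun x y => ∃ π ∈ G, π (0, x) = (0, y)
      iseqv := by
        refine ⟨fun x => ⟨1, G.one_mem, rfl⟩, ?_, ?_⟩
        · rintro x y ⟨π, hπ, h⟩
          refine ⟨π⁻¹, G.inv_mem hπ, ?_⟩
          rw [Perm.inv_eq_iff_eq, h]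
        · rintro x y z ⟨π, hπ, h⟩ ⟨π', hπ', h'⟩
          exact ⟨π' * π, G.mul_mem hπ' hπ, by rw [Perm.mul_apply, h, h']⟩ }
  have key : ∀ x x' : X, r x x' := by
    apply htr r
    · intro x
      refine ⟨Pm n σ ^ (n + 1), G.pow_mem h1 _, ?_⟩
      rw [pow_succ', Perm.mul_apply, Pm_iter _ n le_rfl]
      exact Pm_last σ x
    · intro τ hτ x
      obtain ⟨i, hi, rfl⟩ := List.mem_iff_getElem.1 hτ
      refine ⟨(Pm n σ ^ i)⁻¹ * Fib (fun i : Fin (n + 1) => T[i]) * Pm n σ ^ i,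
        G.mul_mem (G.mul_mem (G.inv_mem (G.pow_mem h1 _)) h2) (G.pow_mem h1 _), ?_⟩
      rw [Perm.mul_apply, Perm.mul_apply, Pm_iter _ i (by omega), Fib_apply, Perm.inv_eq_iff_eq,
        Pm_iter _ i (by omega)]
      rfl
  obtain ⟨π, hπ, h⟩ := key y.2 z.2
  refine ⟨Pm n σ ^ (z.1 : ℕ) * π * (Pm n σ ^ (y.1 : ℕ))⁻¹,
    G.mul_mem (G.mul_mem (G.pow_mem h1 _) hπ) (G.inv_mem (G.pow_mem h1 _)), ?_⟩
  have e : (Pm n σ ^ (y.1 : ℕ))⁻¹ y = (0, y.2) := by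
    rw [Perm.inv_eq_iff_eq, Pm_iter _ _ (by omega)]
  rw [Perm.mul_apply, Perm.mul_apply, e, h, Pm_iter _ _ (by omega)]

end BC

/-- The monodromy content of Corollary 1.2: with `d, ℓ, g` positive,
partitions `(a₁,…,a_p)`, `(b₁,…,b_q)` of `d` and `(m₁,…,m_ℓ)` of
`p + q - 2 + 2g` with each `mᵢ + 1 ≤ d`, there exist `π₁, π₂, π₃` in the
symmetric group on `ℓd` letters with `π₁ π₂ π₃ = id`, of cycle types
`(ℓa₁,…,ℓa_p)`, `(ℓb₁,…,ℓb_q)` and `(m₁+1,…,m_ℓ+1,1,…,1)` respectively,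
generating a transitive subgroup. -/
theorem cor_1_2 (d ℓ g p q : ℕ) (hd : 0 < d) (hℓ : 0 < ℓ) (hg : 0 < g)
    (hp : 0 < p) (hq : 0 < q)
    (a : Fin p → ℕ) (b : Fin q → ℕ) (m : Fin ℓ → ℕ)
    (ha : ∀ i, 0 < a i) (hb : ∀ i, 0 < b i) (hm : ∀ i, 0 < m i)
    (hsa : ∑ i, a i = d) (hsb : ∑ i, b i = d)
    (hsm : ∑ i, m i = p + q - 2 + 2 * g)
    (hmd : ∀ i, m i + 1 ≤ d) :
    ∃ (π₁ π₂ π₃ : Equiv.Perm (Fin (ℓ * d))),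
      π₁ * π₂ * π₃ = 1 ∧
      fullCycleType π₁ = Finset.univ.val.map (fun i => ℓ * a i) ∧
      fullCycleType π₂ = Finset.univ.val.map (fun i => ℓ * b i) ∧
      fullCycleType π₃ =
        Finset.univ.val.map (fun i => m i + 1) +
          Multiset.replicate (ℓ * d - ∑ i, (m i + 1)) 1 ∧
      (∀ x y : Fin (ℓ * d),
        ∃ π ∈ Subgroup.closure ({π₁, π₂, π₃} : Set (Equiv.Perm (Fin (ℓ * d)))),
          π x = y) := by
  obtain ⟨n, rfl⟩ : ∃ n, ℓ = n + 1 := ⟨ℓ - 1, by omega⟩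
  obtain ⟨σ, τs, hF, tσ, tb, htr⟩ := BC.main_chain d g hd hg (Finset.univ.val.map b)
    (by intro x hx; obtain ⟨i, _, rfl⟩ := Multiset.mem_map.1 hx; exact hb i)
    (by rw [← hsb]; rfl)
    (List.ofFn m).reverse
    (by
      intro x hx
      simp only [List.mem_reverse, List.mem_ofFn] at hx
      obtain ⟨i, rfl⟩ := hx
      exact ⟨hm i, hmd i⟩)
    (Finset.univ.val.map a)
    (by intro x hx; obtain ⟨i, _, rfl⟩ := Multiset.mem_map.1 hx; exact ha i)
    (by rw [← hsa]; rfl)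
    (by
      rw [List.sum_reverse, List.sum_ofFn, hsm]
      simp
      omega)
  have hT : τs.reverse.length = n + 1 := by
    rw [List.length_reverse, ← hF.length_eq]; simp
  obtain ⟨T, rfl⟩ : ∃ T, τs = T.reverse := ⟨τs.reverse, by simp⟩
  rw [List.reverse_reverse] at hT
  rw [List.forall₂_reverse_iff] at hF
  have hC : ∀ i : Fin (n + 1), BC.IsC (m i) T[i] := by
    intro i
    have := hF.get (i := i) (by simp; omega) (by omega)
    simp only [List.get_eq_getElem, List.getElem_ofFn] at this
    exact this
  have hfull : ∀ π : Equiv.Perm (Fin (n + 1) × Fin d),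
      fullCycleType (finProdFinEquiv.permCongr π) = BC.typ π := by
    intro π
    unfold fullCycleType BC.typ
    rw [Equiv.Perm.parts_partition, ← Equiv.Perm.sum_cycleType, ← Equiv.Perm.sum_cycleType,
      BC.typ_congr]
    simp
  set E := (finProdFinEquiv : Fin (n + 1) × Fin d ≃ Fin ((n + 1) * d)).permCongrHom with hE
  have hE' : ∀ π, E π = finProdFinEquiv.permCongr π := fun _ => rfl
  set P1 := BC.Pm n σ with hP1
  set P3 := BC.Fib (fun i : Fin (n + 1) => T[i]) with hP3
  refine ⟨E P1, E (P1⁻¹ * P3⁻¹), E P3, ?_, ?_, ?_, ?_, ?_⟩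
  · rw [← map_mul, ← map_mul]
    simp
  · rw [hE', hfull, hP1, BC.typ_Pm, tσ, Multiset.map_map]
    rfl
  · have e : P1⁻¹ * P3⁻¹ = P1⁻¹ * (P1 * P3)⁻¹ * P1⁻¹⁻¹ := by group
    rw [hE', hfull, e, BC.typ_conj, BC.typ_inv, hP1, hP3, BC.Pm_Fib σ T hT, BC.typ_conj,
      BC.typ_Pm, tb, Multiset.map_map]
    rfl
  · have hc := BC.cycleType_Fib m hm (fun i : Fin (n + 1) => T[i]) hC
    rw [← hP3] at hc
    unfold fullCycleType
    rw [hE', ← Equiv.Perm.sum_cycleType, BC.typ_congr, hc]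
    rfl
  · intro x y
    set G := Subgroup.closure ({E P1, E (P1⁻¹ * P3⁻¹), E P3} :
      Set (Equiv.Perm (Fin ((n + 1) * d)))) with hG
    have htr' : BC.Tr σ T := by
      intro r h1 h2
      exact htr trivial r h1 (by simpa using h2)
    obtain ⟨π, hπ, h⟩ := BC.lift_trans σ T hT htr' (G.comap E.toMonoidHom)
      (Subgroup.subset_closure (by simp [hP1]))
      (Subgroup.subset_closure (by simp [hP3]))
      (finProdFinEquiv.symm x) (finProdFinEquiv.symm y)
    refine ⟨E π, hπ, ?_⟩
    rw [hE', Equiv.permCongr_apply, h, Equiv.apply_symm_apply]
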